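/- arXiv:2602.04424 — 2 statements merged into one kernel-verified Lean document; each statement's English description precedes it below -/
import Mathlib

section
/- The map (x,y) ↦ R_{x,y}, from ρ_B(T) to the Banach space of bounded linear operators on V equipped with the operator norm, is continuous. -/
/-- `dom (T²)`: the elements of the domain `D` of `T` whose image lies again in `D`. -/
def dom2 {V : Type*} (T : V → V) (D : Set V) : Set V := {u | u ∈ D ∧ T u ∈ D}

/-- `dom (T³)`. -/
def dom3 {V : Type*} (T : V → V) (D : Set V) : Set V := {u | u ∈ dom2 T D ∧ T u ∈ dom2 T D}

/-- `dom_B (T²) = dom(T²) ∩ B`. -/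
def domB2 {V : Type*} (T : V → V) (D Bc : Set V) : Set V := dom2 T D ∩ Bc

/-- The operator `Q_{x,y} u = T²u − 2x Tu + (x² + y²) u`. -/
noncomputable def Qop {V : Type*} [AddCommGroup V] [Module ℝ V]
    (T : V → V) (x y : ℝ) (u : V) : V :=
  T (T u) - (2 * x) • T u + (x ^ 2 + y ^ 2) • u

/-- `R` is a bounded (everywhere-defined) operator which is a two-sided inverse
of `Q_{x,y} : dom_B(T²) → V`; in particular `Q_{x,y}` is bijective from `dom_B(T²)` onto `V`
with bounded inverse `R`. -/
def IsInv {V : Type*} [NormedAddCommGroup V] [NormedSpace ℝ V]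
    (T : V → V) (D Bc : Set V) (x y : ℝ) (R : V →L[ℝ] V) : Prop :=
  (∀ v : V, R v ∈ domB2 T D Bc) ∧ (∀ v : V, Qop T x y (R v) = v) ∧
    (∀ u ∈ domB2 T D Bc, R (Qop T x y u) = u)

/-- The resolvent set `ρ_B(T) ⊆ ℝ²`. -/
def rhoB {V : Type*} [NormedAddCommGroup V] [NormedSpace ℝ V]
    (T : V → V) (D Bc : Set V) : Set (ℝ × ℝ) :=
  {p | ∃ R : V →L[ℝ] V, IsInv T D Bc p.1 p.2 R}

open Topology

/-- If `T` is closed and the bounded operator `R` takes values in the domain of `T`, then `T ∘ R`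
is bounded. -/
theorem exists_clm_comp_of_isClosed_graph {V : Type*} [NormedAddCommGroup V] [NormedSpace ℝ V]
    [CompleteSpace V] {T : V → V} {D : Submodule ℝ V}
    (hTadd : ∀ u ∈ D, ∀ v ∈ D, T (u + v) = T u + T v)
    (hTsmul : ∀ (c : ℝ), ∀ u ∈ D, T (c • u) = c • T u)
    (hTclosed : IsClosed {p : V × V | p.1 ∈ D ∧ p.2 = T p.1})
    (R : V →L[ℝ] V) (hR : ∀ v, R v ∈ D) :
    ∃ S : V →L[ℝ] V, ∀ v, S v = T (R v) := by
  let L : V →ₗ[ℝ] V :=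
    { toFun := fun v => T (R v)
      map_add' := fun u v => by rw [map_add, hTadd _ (hR u) _ (hR v)]
      map_smul' := fun c v => by rw [map_smul, hTsmul c _ (hR v), RingHom.id_apply] }
  have hL : IsClosed (L.graph : Set (V × V)) := by
    have hcont : Continuous fun p : V × V => (R p.1, p.2) := by fun_prop
    convert hTclosed.preimage hcont using 1
    ext p
    simp [L, LinearMap.mem_graph_iff, hR]
  exact ⟨ContinuousLinearMap.ofIsClosedGraph hL, fun v => rfl⟩

/-- The resolvent identity `R_q (1 - E) = R_p`, where `E = (Q_p - Q_q) R_p`. -/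
theorem IsInv.mul_one_sub_eq {V : Type*} [NormedAddCommGroup V] [NormedSpace ℝ V]
    {T : V → V} {D Bc : Set V} {x y x' y' : ℝ} {R R' S : V →L[ℝ] V}
    (hR : IsInv T D Bc x y R) (hR' : IsInv T D Bc x' y' R') (hS : ∀ v, S v = T (R v)) :
    R' * (1 - ((2 * (x' - x)) • S + ((x ^ 2 + y ^ 2) - (x' ^ 2 + y' ^ 2)) • R)) = R := by
  ext v
  have hQ : (1 - ((2 * (x' - x)) • S + ((x ^ 2 + y ^ 2) - (x' ^ 2 + y' ^ 2)) • R)) v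
      = Qop T x' y' (R v) := by
    have hv : T (T (R v)) - (2 * x) • T (R v) + (x ^ 2 + y ^ 2) • R v = v := hR.2.1 v
    simp only [Qop, sub_apply, add_apply, smul_apply, one_apply_eq_self, hS]
    nth_rewrite 1 [← hv]
    module
  rw [mul_apply_eq_comp, hQ, hR'.2.2 _ (hR.1 v)]

/-- `(x,y) ↦ R_{x,y}` is continuous on `ρ_B(T)` in operator norm. -/
theorem stmt3 {V : Type*} [NormedAddCommGroup V] [NormedSpace ℝ V] [CompleteSpace V]
    (T : V → V) (D Bc : Submodule ℝ V) (hBD : (Bc : Set V) ⊆ (D : Set V))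
    (hTadd : ∀ u ∈ D, ∀ v ∈ D, T (u + v) = T u + T v)
    (hTsmul : ∀ (c : ℝ), ∀ u ∈ D, T (c • u) = c • T u)
    (hTclosed : IsClosed {p : V × V | p.1 ∈ D ∧ p.2 = T p.1})
    (Rf : ℝ × ℝ → V →L[ℝ] V)
    (hRf : ∀ p ∈ rhoB T (D : Set V) (Bc : Set V),
      IsInv T (D : Set V) (Bc : Set V) p.1 p.2 (Rf p)) :
    ContinuousOn Rf (rhoB T (D : Set V) (Bc : Set V)) := by
  intro p hp
  have hRp := hRf p hp
  obtain ⟨S, hS⟩ := exists_clm_comp_of_isClosed_graph hTadd hTsmul hTclosed (Rf p)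
    fun v => (hRp.1 v).1.1
  let F : ℝ × ℝ → V →L[ℝ] V := fun q =>
    1 - ((2 * (q.1 - p.1)) • S + ((p.1 ^ 2 + p.2 ^ 2) - (q.1 ^ 2 + q.2 ^ 2)) • Rf p)
  have hFp : F p = 1 := by simp [F]
  have hF : ContinuousAt F p := by
    refine Continuous.continuousAt ?_
    fun_prop
  have hinv : ContinuousAt Ring.inverse (F p) := by
    rw [hFp]
    exact NormedRing.inverse_continuousAt (1 : (V →L[ℝ] V)ˣ)
  have hunit : ∀ᶠ q in 𝓝 p, IsUnit (F q) :=
    hF.eventually (Units.isOpen.mem_nhds (by rw [Set.mem_ofPred_eq, hFp]; exact isUnit_one))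
  have hG : ContinuousAt (fun q => Rf p * Ring.inverse (F q)) p :=
    continuousAt_const.mul (ContinuousAt.comp (f := F) hinv hF)
  refine hG.continuousWithinAt.congr_of_eventuallyEq ?_ (by simp [hFp])
  filter_upwards [self_mem_nhdsWithin, nhdsWithin_le_nhds hunit] with q hq hqu
  have hmul : Rf q * F q = Rf p := hRp.mul_one_sub_eq (hRf q hq) hS
  rw [← hmul, mul_assoc, Ring.mul_inverse_cancel _ hqu, mul_one]
end

section
/- For (x,y) ∈ ρ_B(T) define the bounded operators f₀(x,y) := −T∘R_{x,y} + x·R_{x,y} and f₁(x,y) := −y·R_{x,y}. Then f₀ and f₁ are continuously differentiable on ρ_B(T) (values in the Banach space of bounded operators on V) and, writing R := R_{x,y} and TR := T∘R_{x,y}, their partial derivatives are: ∂f₀/∂x = −2(TR)∘(TR) + 2x(TR)∘R + 2xR∘(TR) − 2x²R∘R + R; ∂f₀/∂y = 2y(TR)∘R − 2xyR∘R; ∂f₁/∂x = −2yR∘(TR) + 2xyR∘R; ∂f₁/∂y = 2y²R∘R − R. -/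
/-- A function `F` with `F q * (1 - A q) = F p` near `p`, where `A` is smooth and vanishes at `p`,
is smooth at `p`. -/
theorem contDiffAt_of_mul_one_sub {E 𝔸 : Type*} [NormedAddCommGroup E] [NormedSpace ℝ E]
    [NormedRing 𝔸] [NormedAlgebra ℝ 𝔸] [CompleteSpace 𝔸] {n : WithTop ℕ∞} {F A : E → 𝔸} {p : E}
    (hA0 : A p = 0) (hA : ContDiffAt ℝ n A p) (hF : ∀ᶠ q in nhds p, F q * (1 - A q) = F p) :
    ContDiffAt ℝ n F p := by
  have hcont : ContDiffAt ℝ n (fun q => F p * Ring.inverse (1 - A q)) p := by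
    refine contDiffAt_const.mul (ContDiffAt.fun_comp p ?_ (contDiffAt_const.sub hA))
    simpa [hA0] using contDiffAt_ringInverse ℝ (1 : 𝔸ˣ)
  refine hcont.congr_of_eventuallyEq ?_
  have hunit : ∀ᶠ q in nhds p, IsUnit (1 - A q) := by
    have : ContinuousAt (fun q => 1 - A q) p := continuousAt_const.sub hA.continuousAt
    exact this.eventually (Units.isOpen.mem_nhds (by simp [hA0]))
  filter_upwards [hF, hunit] with q hq hu
  rw [← hq, mul_assoc, Ring.mul_inverse_cancel _ hu, mul_one]

/-- The derivative at `p` of a differentiable function `F` with `F q * (1 - A q) = F p` near `p`,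
where `A p = 0`. -/
theorem hasFDerivAt_of_mul_one_sub {E 𝔸 : Type*} [NormedAddCommGroup E] [NormedSpace ℝ E]
    [NormedRing 𝔸] [NormedAlgebra ℝ 𝔸] {F A : E → 𝔸} {p : E} {A' : E →L[ℝ] 𝔸}
    (hA0 : A p = 0) (hA : HasFDerivAt A A' p) (hFd : DifferentiableAt ℝ F p)
    (hF : ∀ᶠ q in nhds p, F q * (1 - A q) = F p) :
    HasFDerivAt F ((ContinuousLinearMap.mul ℝ 𝔸 (F p)).comp A') p := by
  have hprod := hFd.hasFDerivAt.mul' (hA.const_sub 1)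
  have hconst : HasFDerivAt (fun q => F q * (1 - A q)) (0 : E →L[ℝ] 𝔸) p :=
    (hasFDerivAt_const (F p) p).congr_of_eventuallyEq hF
  have heq := hprod.unique hconst
  convert hFd.hasFDerivAt using 1
  ext v
  have hv := DFunLike.congr_fun heq v
  simpa [hA0, neg_add_eq_zero] using hv

/-- The perturbation `(Q_p - Q_q) ∘ R_p`, written in terms of `R = R_p` and `S = T ∘ R_p`. -/
noncomputable def resolventPerturbation {M : Type*} [AddCommGroup M] [Module ℝ M]
    (p : ℝ × ℝ) (R S : M) (q : ℝ × ℝ) : M :=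
  (2 * (q.1 - p.1)) • S + (p.1 ^ 2 + p.2 ^ 2 - (q.1 ^ 2 + q.2 ^ 2)) • R

theorem resolventPerturbation_self {M : Type*} [AddCommGroup M] [Module ℝ M]
    (p : ℝ × ℝ) (R S : M) : resolventPerturbation p R S p = 0 := by
  simp [resolventPerturbation]

theorem contDiff_resolventPerturbation {M : Type*} [NormedAddCommGroup M] [NormedSpace ℝ M]
    {n : WithTop ℕ∞} (p : ℝ × ℝ) (R S : M) : ContDiff ℝ n (resolventPerturbation p R S) := by
  unfold resolventPerturbation
  fun_prop

theorem hasFDerivAt_resolventPerturbation {M : Type*} [NormedAddCommGroup M] [NormedSpace ℝ M]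
    (p : ℝ × ℝ) (R S : M) :
    HasFDerivAt (resolventPerturbation p R S)
      ((ContinuousLinearMap.fst ℝ ℝ ℝ).smulRight ((2 : ℝ) • S - (2 * p.1) • R) +
        (ContinuousLinearMap.snd ℝ ℝ ℝ).smulRight (-(2 * p.2) • R)) p := by
  have h1 : HasFDerivAt (fun q : ℝ × ℝ => q.1) (ContinuousLinearMap.fst ℝ ℝ ℝ) p := hasFDerivAt_fst
  have h2 : HasFDerivAt (fun q : ℝ × ℝ => q.2) (ContinuousLinearMap.snd ℝ ℝ ℝ) p := hasFDerivAt_snd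
  have h := (((h1.sub_const p.1).const_mul 2).smul_const S).add
    ((((h1.pow 2).add (h2.pow 2)).const_sub (p.1 ^ 2 + p.2 ^ 2)).smul_const R)
  refine h.congr_fderiv ?_
  ext
  · simp
    module
  · simp

/-- The resolvent identity `R_q (1 - (Q_p - Q_q) R_p) = R_p`. -/
theorem IsInv.mul_one_sub_resolventPerturbation {V : Type*} [NormedAddCommGroup V]
    [NormedSpace ℝ V] {T : V → V} {D Bc : Set V} {p q : ℝ × ℝ} {R R' S : V →L[ℝ] V}
    (hR : IsInv T D Bc p.1 p.2 R) (hR' : IsInv T D Bc q.1 q.2 R')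
    (hS : ∀ v, S v = T (R v)) :
    R' * (1 - resolventPerturbation p R S q) = R := by
  ext v
  have hQ : (1 - resolventPerturbation p R S q) v = Qop T q.1 q.2 (R v) := by
    have hv := hR.2.1 v
    simp only [Qop] at hv ⊢
    simp only [resolventPerturbation, sub_apply, add_apply, smul_apply,
      one_apply_eq_self, hS]
    nth_rewrite 1 [← hv]
    module
  rw [mul_apply_eq_comp, hQ, hR'.2.2 _ (hR.1 v)]

/-- the slice components `f₀(x,y) = −T∘R + xR`, `f₁(x,y) = −yR` of the
`S`-resolvent operators are continuously differentiable on `ρ_B(T)` with the indicated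
partial derivatives. -/
theorem stmt10 {V : Type*} [NormedAddCommGroup V] [NormedSpace ℝ V] [CompleteSpace V]
    (T : V → V) (D Bc : Submodule ℝ V) (hBD : (Bc : Set V) ⊆ (D : Set V))
    (hTadd : ∀ u ∈ D, ∀ v ∈ D, T (u + v) = T u + T v)
    (hTsmul : ∀ (c : ℝ), ∀ u ∈ D, T (c • u) = c • T u)
    (hTclosed : IsClosed {p : V × V | p.1 ∈ D ∧ p.2 = T p.1})
    (hopen : IsOpen (rhoB T (D : Set V) (Bc : Set V)))
    (Rf TRf : ℝ × ℝ → V →L[ℝ] V)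
    (hRf : ∀ p ∈ rhoB T (D : Set V) (Bc : Set V),
      IsInv T (D : Set V) (Bc : Set V) p.1 p.2 (Rf p))
    (hTRf : ∀ p ∈ rhoB T (D : Set V) (Bc : Set V), ∀ v : V, TRf p v = T (Rf p v)) :
    ContDiffOn ℝ 1 (fun p : ℝ × ℝ => -(TRf p) + p.1 • Rf p)
        (rhoB T (D : Set V) (Bc : Set V)) ∧
      ContDiffOn ℝ 1 (fun p : ℝ × ℝ => -(p.2 • Rf p))
        (rhoB T (D : Set V) (Bc : Set V)) ∧
      ∀ p ∈ rhoB T (D : Set V) (Bc : Set V),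
        HasFDerivAt (fun p : ℝ × ℝ => -(TRf p) + p.1 • Rf p)
          ((ContinuousLinearMap.fst ℝ ℝ ℝ).smulRight
              ((-(2 : ℝ)) • ((TRf p).comp (TRf p)) + (2 * p.1) • ((TRf p).comp (Rf p))
                + (2 * p.1) • ((Rf p).comp (TRf p))
                - (2 * p.1 ^ 2) • ((Rf p).comp (Rf p)) + Rf p) +
            (ContinuousLinearMap.snd ℝ ℝ ℝ).smulRight
              ((2 * p.2) • ((TRf p).comp (Rf p))
                - (2 * p.1 * p.2) • ((Rf p).comp (Rf p)))) p ∧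
        HasFDerivAt (fun p : ℝ × ℝ => -(p.2 • Rf p))
          ((ContinuousLinearMap.fst ℝ ℝ ℝ).smulRight
              ((-(2 * p.2)) • ((Rf p).comp (TRf p))
                + (2 * p.1 * p.2) • ((Rf p).comp (Rf p))) +
            (ContinuousLinearMap.snd ℝ ℝ ℝ).smulRight
              ((2 * p.2 ^ 2) • ((Rf p).comp (Rf p)) - Rf p)) p := by
  have hRid : ∀ p ∈ rhoB T (D : Set V) (Bc : Set V), ∀ᶠ q in nhds p,
      Rf q * (1 - resolventPerturbation p (Rf p) (TRf p) q) = Rf p := fun p hp => by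
    filter_upwards [hopen.mem_nhds hp] with q hq
    exact (hRf p hp).mul_one_sub_resolventPerturbation (hRf q hq) (hTRf p hp)
  have hTRid : ∀ p ∈ rhoB T (D : Set V) (Bc : Set V), ∀ᶠ q in nhds p,
      TRf q * (1 - resolventPerturbation p (Rf p) (TRf p) q) = TRf p := fun p hp => by
    filter_upwards [hopen.mem_nhds hp] with q hq
    ext v
    rw [mul_apply_eq_comp, hTRf q hq, hTRf p hp, ← mul_apply_eq_comp,
      (hRf p hp).mul_one_sub_resolventPerturbation (hRf q hq) (hTRf p hp)]
  have hRsmooth : ∀ p ∈ rhoB T (D : Set V) (Bc : Set V), ContDiffAt ℝ 1 Rf p := fun p hp =>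
    contDiffAt_of_mul_one_sub (resolventPerturbation_self _ _ _)
      (contDiff_resolventPerturbation _ _ _).contDiffAt (hRid p hp)
  have hTRsmooth : ∀ p ∈ rhoB T (D : Set V) (Bc : Set V), ContDiffAt ℝ 1 TRf p := fun p hp =>
    contDiffAt_of_mul_one_sub (resolventPerturbation_self _ _ _)
      (contDiff_resolventPerturbation _ _ _).contDiffAt (hTRid p hp)
  refine ⟨fun p hp => ?_, fun p hp => ?_, fun p hp => ?_⟩
  · exact ((hTRsmooth p hp).neg.add (contDiffAt_fst.smul (hRsmooth p hp))).contDiffWithinAt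
  · exact (contDiffAt_snd.smul (hRsmooth p hp)).neg.contDiffWithinAt
  · have hdR := hasFDerivAt_of_mul_one_sub (resolventPerturbation_self _ _ _)
      (hasFDerivAt_resolventPerturbation p (Rf p) (TRf p))
      ((hRsmooth p hp).differentiableAt one_ne_zero) (hRid p hp)
    have hdTR := hasFDerivAt_of_mul_one_sub (resolventPerturbation_self _ _ _)
      (hasFDerivAt_resolventPerturbation p (Rf p) (TRf p))
      ((hTRsmooth p hp).differentiableAt one_ne_zero) (hTRid p hp)
    constructor
    · refine (hdTR.neg.add (hasFDerivAt_fst.smul hdR)).congr_fderiv ?_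
      ext <;> simp <;> module
    · refine (hasFDerivAt_snd.smul hdR).neg.congr_fderiv ?_
      ext <;> simp <;> module
end
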